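/- For every p ∈ [1,∞), the fractional cost of the adjusted correlation metric f in the ℓp-norm objective satisfies ( Σ_{u∈V} ( Σ_{v∈N_u^+} f_uv + Σ_{v∈N_u^-} (1 − f_uv) )^p )^{1/p} ≤ 529 · OPT(p). -/

import Mathlib

/-!
Fix a clustering `c` with disagreement vector `y`, and write `Δ u = |N_u^+|`. The fractional cost is
compared with `y` one edge at a time, and the comparison is then summed with a Schur test.

* If `c u = c v`, every vertex of `N_u^+ ∆ N_v^+` is a disagreement at `u` or at `v`, hence
  `d_uv ≤ (y u + y v) / max (Δ u) (Δ v)`. If `c u ≠ c v`, every vertex of `N_u^+ ∩ N_v^+` is one,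
  hence `1 - d_uv ≤ (y u + y v) / max (Δ u) (Δ v)`.
* Suppose `u, v` are in the same cluster and one of them, say `x`, lies in `R₁`. If
  `Δ x ≤ 10 * y x`, then `1 ≤ 20 (y u + y v) / max (Δ u) (Δ v)`: clear when `Δ u` and `Δ v` are
  within a factor `2`, and otherwise `N_u^+ ∆ N_v^+` is large. If `10 * y x < Δ x`, the cluster is
  *bad*: it nearly coincides with `N_x^+`, while the many close negative neighbours of `x` lie
  mostly outside it and send about `(Δ x)^2` positive edges into it. So a bad cluster `C` satisfies
  `|C|^2 ≤ 2 * ∑ w ∈ C, y w`.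

Each pair `u ≠ v` therefore costs at most the indicator of a disagreement, plus `20 (y u + y v)`
divided by `max (Δ u) (Δ v)` on the pairs of the relation `Charged`, plus the indicator that `u, v` share
a bad cluster. `Charged` is symmetric and relates `u` to at most `(13/3) Δ u` vertices, by the
definition of `R₁`. Summing, the cost at `u` is at most `∑ v, W u v * y v` for a symmetric
nonnegative kernel `W` with row sums at most `529`, and such a kernel has `ℓp` operator norm at most
`529` for every `p ≥ 1` (`schur_symm`).
-/

open Finset

noncomputable section

variable {V : Type*} [Fintype V] [DecidableEq V]

/-- Positive neighborhood of `u` (including the positive self-loop at `u`). -/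
def Nplus (E : V → V → Prop) [DecidableRel E] (u : V) : Finset V :=
  insert u (Finset.univ.filter fun v => v ≠ u ∧ E u v)

/-- Negative neighborhood of `u`. -/
def Nminus (E : V → V → Prop) [DecidableRel E] (u : V) : Finset V :=
  Finset.univ.filter fun v => v ≠ u ∧ ¬ E u v

/-- The correlation metric `d`. -/
def corrDist (E : V → V → Prop) [DecidableRel E] (u v : V) : ℝ :=
  if u = v then 0
  else 1 - ((Nplus E u ∩ Nplus E v).card : ℝ) / ((Nplus E u ∪ Nplus E v).card : ℝ)

/-- The set `R₁` of vertices `u` with `|N_u^- ∩ {v : d_uv ≤ 0.7}| ≥ (10/3)·Δ_u`. -/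
def R1set (E : V → V → Prop) [DecidableRel E] : Finset V :=
  Finset.univ.filter fun u =>
    (10 / 3 : ℝ) * (Nplus E u).card ≤ ((Nminus E u).filter fun v => corrDist E u v ≤ 0.7).card

/-- The adjusted correlation metric `f`: start from `d`, round negative edges with
`d > 0.7` up to `1`, and set `f_uv = 1` for all `v ≠ u` whenever `u ∈ R₁`. -/
def adjDist (E : V → V → Prop) [DecidableRel E] (u v : V) : ℝ :=
  if u = v then 0
  else if u ∈ R1set E ∨ v ∈ R1set E then 1
  else if ¬ E u v ∧ 0.7 < corrDist E u v then 1
  else corrDist E u v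

/-- A clustering is encoded by a map `c : V → V`; the cluster `C(u)` is the fiber of `c` at `u`. -/
def clusterOf (c : V → V) (u : V) : Finset V :=
  Finset.univ.filter fun w => c w = c u

/-- The number of disagreements incident to `u` with respect to the clustering `c`. -/
def disag (E : V → V → Prop) [DecidableRel E] (c : V → V) (u : V) : ℕ :=
  (Finset.univ.filter fun v =>
    v ≠ u ∧ ((E u v ∧ c u ≠ c v) ∨ (¬ E u v ∧ c u = c v))).card

/-- `OPT(1)`: the minimum total number of disagreements over all clusterings. -/
def OPT1 (E : V → V → Prop) [DecidableRel E] : ℕ :=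
  Finset.univ.inf' ⟨id, Finset.mem_univ id⟩ fun c : V → V => ∑ u, disag E c u

/-- `OPT(p)`: the minimum `ℓ_p`-norm of the disagreement vector over all clusterings. -/
def OPTlp (E : V → V → Prop) [DecidableRel E] (p : ℝ) : ℝ :=
  Finset.univ.inf' ⟨id, Finset.mem_univ id⟩ fun c : V → V =>
    (∑ u, (disag E c u : ℝ) ^ p) ^ (1 / p)

/-- `OPT(∞)`: the minimum `ℓ_∞`-norm of the disagreement vector over all clusterings. -/
def OPTinf (E : V → V → Prop) [DecidableRel E] : ℕ :=
  Finset.univ.inf' ⟨id, Finset.mem_univ id⟩ fun c : V → V => Finset.univ.sup (disag E c)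

/-- The set of bad triangles: triples of distinct vertices spanning exactly two positive
edges and one negative edge. -/
def badTriangles (E : V → V → Prop) [DecidableRel E] : Finset (Finset V) :=
  Finset.univ.filter fun T =>
    ∃ u v w : V, u ≠ v ∧ u ≠ w ∧ v ≠ w ∧ T = {u, v, w} ∧ E u v ∧ E u w ∧ ¬ E v w

/-! ### Neighborhoods and disagreement sets -/

/-- The set of vertices `v` such that the edge `(u, v)` is a disagreement. -/
def disagSet (E : V → V → Prop) [DecidableRel E] (c : V → V) (u : V) : Finset V :=
  Finset.univ.filter fun v =>
    v ≠ u ∧ ((E u v ∧ c u ≠ c v) ∨ (¬ E u v ∧ c u = c v))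

lemma card_disagSet (E : V → V → Prop) [DecidableRel E] (c : V → V) (u : V) :
    (disagSet E c u).card = disag E c u := rfl

lemma mem_disagSet (E : V → V → Prop) [DecidableRel E] (c : V → V) (u v : V) :
    v ∈ disagSet E c u ↔ v ≠ u ∧ ((E u v ∧ c u ≠ c v) ∨ (¬ E u v ∧ c u = c v)) := by
  simp [disagSet]

lemma mem_Nplus (E : V → V → Prop) [DecidableRel E] (u v : V) :
    v ∈ Nplus E u ↔ v = u ∨ E u v := by
  by_cases h : v = u <;> simp [Nplus, h]

lemma mem_Nminus (E : V → V → Prop) [DecidableRel E] (u v : V) :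
    v ∈ Nminus E u ↔ v ≠ u ∧ ¬ E u v := by
  simp [Nminus]

lemma card_Nplus_pos (E : V → V → Prop) [DecidableRel E] (u : V) :
    (0 : ℝ) < (Nplus E u).card := by
  exact_mod_cast Finset.card_pos.2 ⟨u, by simp [mem_Nplus]⟩

lemma card_union_le_of_same (E : V → V → Prop) [DecidableRel E] (c : V → V) {u v : V}
    (hsymm : ∀ u v, E u v ↔ E v u) (h : c u = c v) :
    ((Nplus E u ∪ Nplus E v).card : ℝ) ≤
      (Nplus E u ∩ Nplus E v).card + (disag E c u + disag E c v) := by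
  have hsub : Nplus E u ∪ Nplus E v ⊆
      (Nplus E u ∩ Nplus E v) ∪ (disagSet E c u ∪ disagSet E c v) := by
    intro w
    have := hsymm u v
    simp only [mem_union, mem_inter, mem_Nplus, mem_disagSet]
    grind
  have h1 := Finset.card_le_card hsub
  have h2 := Finset.card_union_le (Nplus E u ∩ Nplus E v) (disagSet E c u ∪ disagSet E c v)
  have h3 := Finset.card_union_le (disagSet E c u) (disagSet E c v)
  rw [card_disagSet, card_disagSet] at h3
  exact_mod_cast h1.trans (h2.trans (by omega))

lemma card_inter_le_of_ne (E : V → V → Prop) [DecidableRel E] (c : V → V) {u v : V}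
    (hsymm : ∀ u v, E u v ↔ E v u) (h : c u ≠ c v) :
    ((Nplus E u ∩ Nplus E v).card : ℝ) ≤ disag E c u + disag E c v := by
  have hsub : Nplus E u ∩ Nplus E v ⊆ disagSet E c u ∪ disagSet E c v := by
    intro w
    have := hsymm u v
    simp only [mem_union, mem_inter, mem_Nplus, mem_disagSet]
    grind
  have h1 := Finset.card_le_card hsub
  have h3 := Finset.card_union_le (disagSet E c u) (disagSet E c v)
  rw [card_disagSet, card_disagSet] at h3
  exact_mod_cast h1.trans h3

/-! ### The metrics `d` and `f` -/

lemma corrDist_comm (E : V → V → Prop) [DecidableRel E] (u v : V) :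
    corrDist E u v = corrDist E v u := by
  simp only [corrDist, inter_comm (Nplus E u), union_comm (Nplus E u), eq_comm (a := u)]

/-- The larger of `Δ u` and `Δ v`. -/
def maxDeg (E : V → V → Prop) [DecidableRel E] (u v : V) : ℝ :=
  max ((Nplus E u).card : ℝ) (Nplus E v).card

lemma maxDeg_pos (E : V → V → Prop) [DecidableRel E] (u v : V) : 0 < maxDeg E u v :=
  lt_max_of_lt_left (card_Nplus_pos E u)

lemma maxDeg_le_card_union (E : V → V → Prop) [DecidableRel E] (u v : V) :
    maxDeg E u v ≤ (Nplus E u ∪ Nplus E v).card := by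
  apply max_le
  · exact_mod_cast Finset.card_le_card subset_union_left
  · exact_mod_cast Finset.card_le_card subset_union_right

lemma one_sub_corrDist (E : V → V → Prop) [DecidableRel E] {u v : V} (h : u ≠ v) :
    1 - corrDist E u v =
      ((Nplus E u ∩ Nplus E v).card : ℝ) / (Nplus E u ∪ Nplus E v).card := by
  simp [corrDist, h]

lemma corrDist_le_one (E : V → V → Prop) [DecidableRel E] (u v : V) : corrDist E u v ≤ 1 := by
  by_cases h : u = v
  · simp [corrDist, h]
  · have := one_sub_corrDist E h
    have : 0 ≤ 1 - corrDist E u v := by rw [this]; positivity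
    linarith

lemma corrDist_nonneg (E : V → V → Prop) [DecidableRel E] (u v : V) : 0 ≤ corrDist E u v := by
  by_cases h : u = v
  · simp [corrDist, h]
  · have h1 := one_sub_corrDist E h
    have : 1 - corrDist E u v ≤ 1 := by
      rw [h1]
      apply div_le_one_of_le₀ _ (by positivity)
      exact_mod_cast Finset.card_le_card (inter_subset_left.trans subset_union_left)
    linarith

lemma adjDist_le_one (E : V → V → Prop) [DecidableRel E] (u v : V) : adjDist E u v ≤ 1 := by
  have := corrDist_le_one E u v
  unfold adjDist
  split_ifs <;> linarith

lemma adjDist_nonneg (E : V → V → Prop) [DecidableRel E] (u v : V) : 0 ≤ adjDist E u v := by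
  have := corrDist_nonneg E u v
  unfold adjDist
  split_ifs <;> linarith

lemma corrDist_le_of_same (E : V → V → Prop) [DecidableRel E] (c : V → V) {u v : V}
    (hsymm : ∀ u v, E u v ↔ E v u) (huv : u ≠ v) (h : c u = c v) :
    corrDist E u v ≤ (disag E c u + disag E c v) / maxDeg E u v := by
  have h1 := one_sub_corrDist E huv
  have h2 := card_union_le_of_same E c hsymm h
  have h3 := maxDeg_le_card_union E u v
  have h0 := maxDeg_pos E u v
  have hU : (0 : ℝ) < (Nplus E u ∪ Nplus E v).card := h0.trans_le h3
  calc corrDist E u v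
      = (((Nplus E u ∪ Nplus E v).card : ℝ) - (Nplus E u ∩ Nplus E v).card) /
          (Nplus E u ∪ Nplus E v).card := by
        rw [sub_div, ← h1, div_self hU.ne']; ring
    _ ≤ (disag E c u + disag E c v) / (Nplus E u ∪ Nplus E v).card := by
        gcongr; linarith
    _ ≤ _ := by gcongr

lemma one_sub_corrDist_le_of_ne (E : V → V → Prop) [DecidableRel E] (c : V → V) {u v : V}
    (hsymm : ∀ u v, E u v ↔ E v u) (h : c u ≠ c v) :
    1 - corrDist E u v ≤ (disag E c u + disag E c v) / maxDeg E u v := by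
  have huv : u ≠ v := fun e => h (congrArg c e)
  rw [one_sub_corrDist E huv]
  have h2 := card_inter_le_of_ne E c hsymm h
  have h3 := maxDeg_le_card_union E u v
  have h0 := maxDeg_pos E u v
  gcongr

/-! ### Bad clusters -/

/-- A vertex of `R₁` with few disagreements relative to its positive degree. -/
def Bad (E : V → V → Prop) [DecidableRel E] (c : V → V) (x : V) : Prop :=
  x ∈ R1set E ∧ 10 * (disag E c x : ℝ) < (Nplus E x).card

/-- The cluster of a bad vertex `x` has average disagreement at least half its size. Its size is at
most `1.1 Δ x`, and at least `(10/3 - 0.1) Δ x` vertices outside it each have at least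
`(0.3 - 0.1) Δ x` positive neighbours inside it. -/
lemma bad_cluster (E : V → V → Prop) [DecidableRel E] (c : V → V) {x : V}
    (hsymm : ∀ u v, E u v ↔ E v u) (hx : Bad E c x) :
    ((clusterOf c x).card : ℝ) ^ 2 ≤ 2 * ∑ w ∈ clusterOf c x, (disag E c w : ℝ) := by
  obtain ⟨hR, hy⟩ := hx
  set D : ℝ := ((Nplus E x).card : ℝ) with hD
  have hD0 : 0 < D := card_Nplus_pos E x
  have hR' : (10 / 3 : ℝ) * D ≤ ((Nminus E x).filter fun v => corrDist E x v ≤ 0.7).card := by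
    simpa [R1set] using hR
  set S := ((Nminus E x).filter fun v => corrDist E x v ≤ 0.7) with hS
  set S' := S.filter (fun s => c s ≠ c x) with hS'
  set T := (clusterOf c x).filter (fun w => w ∈ Nplus E x) with hT
  have hC : ((clusterOf c x).card : ℝ) ≤ D + disag E c x := by
    have hsub : clusterOf c x ⊆ Nplus E x ∪ disagSet E c x := by
      intro w
      simp only [clusterOf, mem_filter, mem_univ, true_and, mem_union, mem_Nplus, mem_disagSet]
      grind
    rw [hD, ← card_disagSet]
    exact_mod_cast (Finset.card_le_card hsub).trans (Finset.card_union_le _ _)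
  have hScard : (S.card : ℝ) ≤ S'.card + disag E c x := by
    have hsub : S ⊆ S' ∪ disagSet E c x := by
      intro w
      simp only [hS', hS, mem_filter, mem_union, mem_Nminus, mem_disagSet]
      grind
    exact_mod_cast (Finset.card_le_card hsub).trans (Finset.card_union_le _ _)
  -- each close negative neighbour outside the cluster has many positive neighbours inside it
  have hin : ∀ s ∈ S', 0.2 * D ≤ ((T.filter fun w => s ∈ Nplus E w).card : ℝ) := by
    intro s hs
    simp only [hS', hS, mem_filter, mem_Nminus] at hs
    obtain ⟨⟨⟨hsx, -⟩, hd⟩, hc⟩ := hs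
    have h1 := one_sub_corrDist E (Ne.symm hsx)
    have hle := maxDeg_le_card_union E x s
    have hDm : D ≤ maxDeg E x s := le_max_left _ _
    have hU : (0 : ℝ) < (Nplus E x ∪ Nplus E s).card := by linarith
    have h2 : 0.3 * D ≤ ((Nplus E x ∩ Nplus E s).card : ℝ) := by
      have h3 : (0.3 : ℝ) ≤
          ((Nplus E x ∩ Nplus E s).card : ℝ) / (Nplus E x ∪ Nplus E s).card := by
        rw [← h1]; linarith
      rw [le_div_iff₀ hU] at h3
      nlinarith
    have hsub : Nplus E x ∩ Nplus E s ⊆ (T.filter fun w => s ∈ Nplus E w) ∪ disagSet E c x := by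
      intro w
      have := hsymm s w
      simp only [hT, clusterOf, mem_filter, mem_univ, true_and, mem_inter, mem_union, mem_Nplus,
        mem_disagSet]
      grind
    have h4 : ((Nplus E x ∩ Nplus E s).card : ℝ) ≤
        (T.filter fun w => s ∈ Nplus E w).card + disag E c x := by
      exact_mod_cast (Finset.card_le_card hsub).trans (Finset.card_union_le _ _)
    linarith
  have hsum : (S'.card : ℝ) * (0.2 * D) ≤ ∑ w ∈ clusterOf c x, (disag E c w : ℝ) := by
    calc (S'.card : ℝ) * (0.2 * D) = ∑ s ∈ S', 0.2 * D := by simp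
      _ ≤ ∑ s ∈ S', ((T.filter fun w => s ∈ Nplus E w).card : ℝ) := Finset.sum_le_sum hin
      _ = ∑ w ∈ T, ((S'.filter fun s => s ∈ Nplus E w).card : ℝ) := by
        exact_mod_cast Finset.sum_card_bipartiteAbove_eq_sum_card_bipartiteBelow
          (fun s w => s ∈ Nplus E w)
      _ ≤ ∑ w ∈ T, (disag E c w : ℝ) := by
        apply Finset.sum_le_sum
        intro w hw
        have hsub : (S'.filter fun s => s ∈ Nplus E w) ⊆ disagSet E c w := by
          intro s
          simp only [hT, clusterOf, mem_filter, mem_univ, true_and] at hw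
          simp only [hS', mem_filter, mem_Nplus, mem_disagSet]
          grind
        exact_mod_cast Finset.card_le_card hsub
      _ ≤ _ := Finset.sum_le_sum_of_subset_of_nonneg (Finset.filter_subset _ _)
          (fun _ _ _ => by positivity)
  have hS'' : (3.2 : ℝ) * D ≤ S'.card := by linarith
  have hC' : ((clusterOf c x).card : ℝ) ≤ 1.1 * D := by linarith
  nlinarith [Nat.cast_nonneg (α := ℝ) (clusterOf c x).card]

/-! ### The bound for a single edge -/

/-- The pairs on which `(y u + y v) / maxDeg u v` is charged: positive pairs (including `u = v`) and
those negative pairs that may have `f_uv < 1`. -/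
def Charged (E : V → V → Prop) [DecidableRel E] (u v : V) : Prop :=
  v ∈ Nplus E u ∨ (u ∉ R1set E ∧ v ∉ R1set E ∧ v ∈ Nminus E u ∧ corrDist E u v ≤ 0.7)

lemma Charged_comm (E : V → V → Prop) [DecidableRel E] (hsymm : ∀ u v, E u v ↔ E v u) (u v : V) :
    Charged E u v ↔ Charged E v u := by
  have := hsymm u v
  unfold Charged
  rw [corrDist_comm E u v]
  simp only [mem_Nplus, mem_Nminus]
  grind

/-- The contribution of the pair `u, v` to the fractional cost. -/
def edgeCost (E : V → V → Prop) [DecidableRel E] (u v : V) : ℝ :=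
  if v ∈ Nplus E u then adjDist E u v else 1 - adjDist E u v

/-- If the degrees differ by a factor more than `2`, then `N_u^+ ∆ N_v^+` has at least
`maxDeg E u v / 2` elements, all of them disagreements at `u` or `v`. -/
lemma one_le_of_not_bad (E : V → V → Prop) [DecidableRel E] (c : V → V) {u v : V}
    (hsymm : ∀ u v, E u v ↔ E v u) (h : c u = c v)
    (hx : ((Nplus E u).card : ℝ) ≤ 10 * disag E c u ∨
      ((Nplus E v).card : ℝ) ≤ 10 * disag E c v) :
    1 ≤ 20 * ((disag E c u + disag E c v) / maxDeg E u v) := by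
  have h0 := maxDeg_pos E u v
  rw [← mul_div_assoc, le_div_iff₀ h0, one_mul]
  have h1 := card_union_le_of_same E c hsymm h
  have hu : ((Nplus E u ∩ Nplus E v).card : ℝ) ≤ (Nplus E u).card := by
    exact_mod_cast Finset.card_le_card inter_subset_left
  have hv : ((Nplus E u ∩ Nplus E v).card : ℝ) ≤ (Nplus E v).card := by
    exact_mod_cast Finset.card_le_card inter_subset_right
  have h2 := maxDeg_le_card_union E u v
  have yu : (0 : ℝ) ≤ disag E c u := by positivity
  have yv : (0 : ℝ) ≤ disag E c v := by positivity
  rcases hx with hx | hx <;> linarith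

open Classical in
/-- The cost of a pair is charged to a disagreement, to the disagreements around `u` and `v`, or to
a bad cluster containing both. -/
lemma edgeCost_le (E : V → V → Prop) [DecidableRel E] (c : V → V)
    (hsymm : ∀ u v, E u v ↔ E v u) (u v : V) :
    edgeCost E u v ≤ (if v ∈ disagSet E c u then 1 else 0)
      + 20 * (if Charged E u v then (disag E c u + disag E c v) / maxDeg E u v else 0)
      + (if c v = c u ∧ ∃ x, c x = c u ∧ Bad E c x then 1 else 0) := by
  have hm := maxDeg_pos E u v
  have hq : (0 : ℝ) ≤ (disag E c u + disag E c v) / maxDeg E u v := by positivity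
  have hf1 := adjDist_le_one E u v
  have hf0 := adjDist_nonneg E u v
  have hA : (0 : ℝ) ≤ (if v ∈ disagSet E c u then 1 else 0) := by split_ifs <;> norm_num
  have hB : (0 : ℝ) ≤ (if Charged E u v then (disag E c u + disag E c v) / maxDeg E u v else 0) := by
    split_ifs <;> linarith
  have hC : (0 : ℝ) ≤ (if c v = c u ∧ ∃ x, c x = c u ∧ Bad E c x then 1 else 0) := by
    split_ifs <;> norm_num
  have he1 : edgeCost E u v ≤ 1 := by unfold edgeCost; split_ifs <;> linarith
  by_cases hdis : v ∈ disagSet E c u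
  · rw [if_pos hdis]; linarith
  by_cases huv : u = v
  · have : edgeCost E u v = 0 := by subst huv; simp [edgeCost, mem_Nplus, adjDist]
    linarith
  by_cases hE : E u v
  · have hP : v ∈ Nplus E u := (mem_Nplus E u v).2 (Or.inr hE)
    have hCh : Charged E u v := Or.inl hP
    have hc : c u = c v := by
      by_contra hne
      exact hdis ((mem_disagSet E c u v).2 ⟨Ne.symm huv, Or.inl ⟨hE, hne⟩⟩)
    rw [if_pos hCh] at hB ⊢
    by_cases hbad : ∃ x, c x = c u ∧ Bad E c x
    · have hboth : c v = c u ∧ ∃ x, c x = c u ∧ Bad E c x := ⟨hc.symm, hbad⟩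
      rw [if_pos hboth]; linarith
    by_cases hR : u ∈ R1set E ∨ v ∈ R1set E
    · have : 1 ≤ 20 * ((disag E c u + disag E c v) / maxDeg E u v) := by
        apply one_le_of_not_bad E c hsymm hc
        rcases hR with hR | hR
        · left
          by_contra hlt
          exact hbad ⟨u, rfl, hR, not_le.1 hlt⟩
        · right
          by_contra hlt
          exact hbad ⟨v, hc.symm, hR, not_le.1 hlt⟩
      linarith
    · have hd := corrDist_le_of_same E c hsymm huv hc
      have : edgeCost E u v = corrDist E u v := by
        simp [edgeCost, hP, adjDist, huv, hR, hE]
      linarith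
  · have hP : v ∉ Nplus E u := by rw [mem_Nplus]; tauto
    have hc : c u ≠ c v := by
      intro he
      exact hdis ((mem_disagSet E c u v).2 ⟨Ne.symm huv, Or.inr ⟨hE, he⟩⟩)
    by_cases hR : u ∈ R1set E ∨ v ∈ R1set E
    · have : edgeCost E u v = 0 := by simp [edgeCost, hP, adjDist, huv, hR]
      linarith
    by_cases hd : 0.7 < corrDist E u v
    · have : edgeCost E u v = 0 := by
        unfold edgeCost adjDist
        rw [if_neg hP, if_neg huv, if_neg hR, if_pos ⟨hE, hd⟩, sub_self]
      linarith
    · have hCh : Charged E u v := by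
        rw [not_or] at hR
        exact Or.inr ⟨hR.1, hR.2, (mem_Nminus E u v).2 ⟨Ne.symm huv, hE⟩, not_lt.1 hd⟩
      rw [if_pos hCh]
      have h1 := one_sub_corrDist_le_of_ne E c hsymm hc
      have : edgeCost E u v = 1 - corrDist E u v := by
        unfold edgeCost adjDist
        rw [if_neg hP, if_neg huv, if_neg hR, if_neg (fun h => hd h.2)]
      linarith

/-! ### The kernel and its row sums -/

open Classical in
/-- The part of the kernel coming from `Charged`. -/
def relKer (E : V → V → Prop) [DecidableRel E] (u v : V) : ℝ :=
  if Charged E u v then 1 / maxDeg E u v else 0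

/-- The averaging kernel of the clustering `c`. -/
def avgKer (c : V → V) (u v : V) : ℝ :=
  if c v = c u then 1 / ((clusterOf c u).card : ℝ) else 0

/-- The kernel dominating the fractional cost. The diagonal weight `88` covers the disagreements at
`u` together with the terms `20 * relKer u v * y u`, since `1 + 20 * (13 / 3) ≤ 88`. -/
def ker (E : V → V → Prop) [DecidableRel E] (c : V → V) (u v : V) : ℝ :=
  (if v = u then 88 else 0) + 20 * relKer E u v + 2 * avgKer c u v

lemma relKer_nonneg (E : V → V → Prop) [DecidableRel E] (u v : V) : 0 ≤ relKer E u v := by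
  have := maxDeg_pos E u v
  unfold relKer; split_ifs <;> positivity

lemma avgKer_nonneg (c : V → V) (u v : V) : 0 ≤ avgKer c u v := by
  unfold avgKer; split_ifs <;> positivity

lemma ker_nonneg (E : V → V → Prop) [DecidableRel E] (c : V → V) (u v : V) :
    0 ≤ ker E c u v := by
  have h1 := relKer_nonneg E u v
  have h2 := avgKer_nonneg c u v
  unfold ker; split_ifs <;> positivity

lemma ker_comm (E : V → V → Prop) [DecidableRel E] (c : V → V)
    (hsymm : ∀ u v, E u v ↔ E v u) (u v : V) : ker E c u v = ker E c v u := by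
  have h1 : relKer E u v = relKer E v u := by
    have hm : maxDeg E u v = maxDeg E v u := max_comm _ _
    by_cases h : Charged E u v
    · rw [relKer, relKer, if_pos h, if_pos ((Charged_comm E hsymm u v).1 h), hm]
    · rw [relKer, relKer, if_neg h, if_neg (mt (Charged_comm E hsymm u v).2 h)]
  have h2 : avgKer c u v = avgKer c v u := by
    by_cases h : c v = c u
    · simp [avgKer, clusterOf, h]
    · simp [avgKer, h, Ne.symm h]
  simp only [ker, h1, h2, eq_comm (a := v)]

/-- `Charged` relates `u` to at most `Δ u` positive neighbours, and, when `u ∉ R₁`, to at most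
`(10/3) Δ u` negative ones. -/
lemma relKer_row (E : V → V → Prop) [DecidableRel E] (u : V) :
    ∑ v, relKer E u v ≤ 13 / 3 := by
  classical
  have hD := card_Nplus_pos E u
  have hcard : ((univ.filter fun v => Charged E u v).card : ℝ) ≤ 13 / 3 * (Nplus E u).card := by
    by_cases hR : u ∈ R1set E
    · have hsub : (univ.filter fun v => Charged E u v) ⊆ Nplus E u := by
        intro v
        rw [mem_filter]
        unfold Charged
        tauto
      have : ((univ.filter fun v => Charged E u v).card : ℝ) ≤ (Nplus E u).card := by
        exact_mod_cast Finset.card_le_card hsub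
      linarith
    · have hsub : (univ.filter fun v => Charged E u v) ⊆
          Nplus E u ∪ (Nminus E u).filter fun v => corrDist E u v ≤ 0.7 := by
        intro v
        rw [mem_filter, mem_union, mem_filter]
        unfold Charged
        tauto
      have h1 : ((univ.filter fun v => Charged E u v).card : ℝ) ≤
          (Nplus E u).card + ((Nminus E u).filter fun v => corrDist E u v ≤ 0.7).card := by
        exact_mod_cast (Finset.card_le_card hsub).trans (Finset.card_union_le _ _)
      simp only [R1set, mem_filter, mem_univ, true_and, not_le] at hR
      linarith
  calc ∑ v, relKer E u v ≤ ∑ v, (if Charged E u v then 1 / ((Nplus E u).card : ℝ) else 0) := by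
        apply Finset.sum_le_sum
        intro v _
        have : ((Nplus E u).card : ℝ) ≤ maxDeg E u v := le_max_left _ _
        unfold relKer
        split_ifs
        · gcongr
        · exact le_rfl
    _ = (univ.filter fun v => Charged E u v).card * (1 / ((Nplus E u).card : ℝ)) := by
        rw [← Finset.sum_filter]; simp
    _ ≤ 13 / 3 := by
        rw [mul_one_div, div_le_iff₀ hD]; exact hcard

lemma card_clusterOf_pos (c : V → V) (u : V) : (0 : ℝ) < (clusterOf c u).card := by
  exact_mod_cast Finset.card_pos.2 ⟨u, by simp [clusterOf]⟩

lemma sum_avgKer_mul (c : V → V) (u : V) (g : V → ℝ) :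
    ∑ v, avgKer c u v * g v = (∑ v ∈ clusterOf c u, g v) / (clusterOf c u).card := by
  rw [Finset.sum_div, clusterOf, Finset.sum_filter]
  refine Finset.sum_congr rfl fun v _ => ?_
  unfold avgKer clusterOf
  split_ifs
  · ring
  · ring

lemma avgKer_row (c : V → V) (u : V) : ∑ v, avgKer c u v = 1 := by
  have := sum_avgKer_mul c u (fun _ => 1)
  simpa [(card_clusterOf_pos c u).ne'] using this

lemma ker_row (E : V → V → Prop) [DecidableRel E] (c : V → V) (u : V) :
    ∑ v, ker E c u v ≤ 529 := by
  have h1 := relKer_row E u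
  have h2 := avgKer_row c u
  simp only [ker, Finset.sum_add_distrib, ← Finset.mul_sum, h2]
  simp
  linarith

/-- The fractional cost at `u` is dominated by the kernel applied to the disagreement vector. -/
lemma cost_le_ker (E : V → V → Prop) [DecidableRel E] (c : V → V)
    (hsymm : ∀ u v, E u v ↔ E v u) (u : V) :
    (∑ v ∈ Nplus E u, adjDist E u v) + ∑ v ∈ Nminus E u, (1 - adjDist E u v) ≤
      ∑ v, ker E c u v * disag E c v := by
  classical
  have hcost : (∑ v ∈ Nplus E u, adjDist E u v) + ∑ v ∈ Nminus E u, (1 - adjDist E u v) =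
      ∑ v, edgeCost E u v := by
    have hN : Nminus E u = univ.filter (fun v => ¬ v ∈ Nplus E u) := by
      ext v; simp [mem_Nminus, mem_Nplus]
    simp only [edgeCost, Finset.sum_ite, ← hN]
    simp
  have hdis : ∑ v, (if v ∈ disagSet E c u then (1 : ℝ) else 0) = disag E c u := by
    simp [card_disagSet]
  have hrel : ∑ v, (if Charged E u v then ((disag E c u : ℝ) + disag E c v) / maxDeg E u v else 0) ≤
      13 / 3 * disag E c u + ∑ v, relKer E u v * disag E c v := by
    have h1 : ∀ v, (if Charged E u v then ((disag E c u : ℝ) + disag E c v) / maxDeg E u v else 0) =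
        relKer E u v * disag E c u + relKer E u v * disag E c v := by
      intro v
      unfold relKer
      split_ifs
      · ring
      · ring
    simp only [h1, Finset.sum_add_distrib, ← Finset.sum_mul]
    gcongr
    exact relKer_row E u
  have hbad : ∑ v, (if c v = c u ∧ ∃ x, c x = c u ∧ Bad E c x then (1 : ℝ) else 0) ≤
      2 * ∑ v, avgKer c u v * disag E c v := by
    by_cases hb : ∃ x, c x = c u ∧ Bad E c x
    · obtain ⟨x, hxu, hx⟩ := id hb
      have hCC : clusterOf c x = clusterOf c u := by simp [clusterOf, hxu]
      have h2 := bad_cluster E c hsymm hx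
      rw [hCC] at h2
      have h3 : ∑ v, (if c v = c u ∧ ∃ x, c x = c u ∧ Bad E c x then (1 : ℝ) else 0) =
          (clusterOf c u).card := by
        simp [hb, clusterOf]
      rw [h3, sum_avgKer_mul, ← mul_div_assoc, le_div_iff₀ (card_clusterOf_pos c u), ← sq]
      exact h2
    · simp only [hb, and_false, if_false, Finset.sum_const_zero]
      exact mul_nonneg (by norm_num)
        (Finset.sum_nonneg fun v _ => mul_nonneg (avgKer_nonneg c u v) (by positivity))
  have hker : ∑ v, ker E c u v * disag E c v = 88 * disag E c u +
      20 * ∑ v, relKer E u v * disag E c v + 2 * ∑ v, avgKer c u v * disag E c v := by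
    simp only [ker, add_mul, Finset.sum_add_distrib, mul_assoc, ← Finset.mul_sum, ite_mul, zero_mul]
    simp
  rw [hcost, hker]
  have hle := Finset.sum_le_sum fun v (_ : v ∈ univ) => edgeCost_le E c hsymm u v
  simp only [Finset.sum_add_distrib, ← Finset.mul_sum] at hle
  have : (0 : ℝ) ≤ disag E c u := by positivity
  linarith

/-! ### The Schur test -/

/-- Schur test: a symmetric nonnegative kernel with row sums at most `R` has `ℓp` operator norm at
most `R`. This is Jensen's inequality in each row followed by an exchange of summation. -/
lemma schur_symm {ι : Type*} [Fintype ι] (W : ι → ι → ℝ) (g : ι → ℝ) {R p : ℝ} (hp : 1 ≤ p)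
    (hR : 0 < R) (hW : ∀ u v, 0 ≤ W u v) (hWs : ∀ u v, W u v = W v u)
    (hrow : ∀ u, ∑ v, W u v ≤ R) (hg : ∀ u, 0 ≤ g u) :
    (∑ u, (∑ v, W u v * g v) ^ p) ^ (1 / p) ≤ R * (∑ v, g v ^ p) ^ (1 / p) := by
  have hp0 : 0 < p := by linarith
  have hgp : ∀ v, 0 ≤ g v ^ p := fun v => Real.rpow_nonneg (hg v) p
  have hu : ∀ u, (∑ v, W u v * g v) ^ p ≤ R ^ (p - 1) * ∑ v, W u v * g v ^ p := by
    intro u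
    have h0 : 0 ≤ ∑ v, W u v := Finset.sum_nonneg fun v _ => hW u v
    have h1 : 0 ≤ ∑ v, W u v * g v ^ p := Finset.sum_nonneg fun v _ => mul_nonneg (hW u v) (hgp v)
    have h2 := Real.inner_le_weight_mul_Lp_of_nonneg univ hp (W u) g (hW u) hg
    calc (∑ v, W u v * g v) ^ p
        ≤ ((∑ v, W u v) ^ (1 - p⁻¹) * (∑ v, W u v * g v ^ p) ^ p⁻¹) ^ p :=
          Real.rpow_le_rpow (Finset.sum_nonneg fun v _ => mul_nonneg (hW u v) (hg v)) h2 hp0.le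
      _ = (∑ v, W u v) ^ (p - 1) * ∑ v, W u v * g v ^ p := by
          rw [Real.mul_rpow (Real.rpow_nonneg h0 _) (Real.rpow_nonneg h1 _), ← Real.rpow_mul h0,
            ← Real.rpow_mul h1, inv_mul_cancel₀ hp0.ne', Real.rpow_one, sub_mul,
            inv_mul_cancel₀ hp0.ne', one_mul]
      _ ≤ _ := by
          gcongr
          exact hrow u
  have hsum : ∑ u, (∑ v, W u v * g v) ^ p ≤ R ^ p * ∑ v, g v ^ p := by
    calc ∑ u, (∑ v, W u v * g v) ^ p
        ≤ ∑ u, R ^ (p - 1) * ∑ v, W u v * g v ^ p := Finset.sum_le_sum fun u _ => hu u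
      _ = R ^ (p - 1) * ∑ v, (∑ u, W v u) * g v ^ p := by
          rw [← Finset.mul_sum, Finset.sum_comm]
          simp only [← Finset.sum_mul, fun v u => hWs u v]
      _ ≤ R ^ (p - 1) * ∑ v, R * g v ^ p := by
          gcongr with v
          · exact hgp v
          · exact hrow v
      _ = R ^ p * ∑ v, g v ^ p := by
          rw [← Finset.mul_sum, ← mul_assoc, Real.rpow_sub_one hR.ne', div_mul_cancel₀ _ hR.ne']
  have hs0 : 0 ≤ ∑ v, g v ^ p := Finset.sum_nonneg fun v _ => hgp v
  calc (∑ u, (∑ v, W u v * g v) ^ p) ^ (1 / p) ≤ (R ^ p * ∑ v, g v ^ p) ^ (1 / p) := by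
        apply Real.rpow_le_rpow _ hsum (by positivity)
        exact Finset.sum_nonneg fun u _ => Real.rpow_nonneg
          (Finset.sum_nonneg fun v _ => mul_nonneg (hW u v) (hg v)) p
    _ = R * (∑ v, g v ^ p) ^ (1 / p) := by
        rw [Real.mul_rpow (by positivity) hs0, ← Real.rpow_mul hR.le, mul_one_div_cancel hp0.ne',
          Real.rpow_one]

/-- for every `p ∈ [1,∞)`, the fractional cost of the adjusted correlation
metric in the `ℓ_p`-norm objective is at most `529 · OPT(p)`. -/
theorem lp_frac_cost (E : V → V → Prop) [DecidableRel E]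
    (hsymm : ∀ u v, E u v ↔ E v u) (p : ℝ) (hp : 1 ≤ p) :
    (∑ u, ((∑ v ∈ Nplus E u, adjDist E u v) +
        ∑ v ∈ Nminus E u, (1 - adjDist E u v)) ^ p) ^ (1 / p) ≤
      529 * OPTlp E p := by
  obtain ⟨c, -, hc⟩ := Finset.exists_mem_eq_inf' (s := (univ : Finset (V → V)))
    ⟨id, Finset.mem_univ id⟩ (fun c : V → V => (∑ u, (disag E c u : ℝ) ^ p) ^ (1 / p))
  have hopt : OPTlp E p = (∑ u, (disag E c u : ℝ) ^ p) ^ (1 / p) := hc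
  have hcost0 : ∀ u, 0 ≤ (∑ v ∈ Nplus E u, adjDist E u v) +
      ∑ v ∈ Nminus E u, (1 - adjDist E u v) := fun u =>
    add_nonneg (Finset.sum_nonneg fun v _ => adjDist_nonneg E u v)
      (Finset.sum_nonneg fun v _ => sub_nonneg.2 (adjDist_le_one E u v))
  rw [hopt]
  refine le_trans ?_ (schur_symm (ker E c) (fun v => (disag E c v : ℝ)) hp (by norm_num)
    (ker_nonneg E c) (ker_comm E c hsymm) (ker_row E c) (fun v => by positivity))
  apply Real.rpow_le_rpow (Finset.sum_nonneg fun u _ => Real.rpow_nonneg (hcost0 u) p)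
  · exact Finset.sum_le_sum fun u _ =>
      Real.rpow_le_rpow (hcost0 u) (cost_le_ker E c hsymm u) (by linarith)
  · positivity
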